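/- Let C be a salient closed convex cone in a finite-dimensional real normed vector space V and let α be a continuous antinorm associated with C whose dual function α^∨ is an antinorm associated with C^∨. Let p ∈ rb(C^∨) be such that p is not identically zero on C. Then p^∨₁ = ∅ (the supremum of ⟨p, ·⟩ over S₁ equals 0 and is not attained), p^∨ = p^∨₀, the set p^∨₀ contains a nonzero vector, and every nonzero element of p^∨₀ lies in rb C. -/

import Mathlib

open Set

variable {V : Type*} [NormedAddCommGroup V] [NormedSpace ℝ V]

/-- `C` is a closed convex cone (containing the origin). -/
def IsClosedConvexCone (C : Set V) : Prop :=
  (0 : V) ∈ C ∧ IsClosed C ∧ Convex ℝ C ∧ ∀ c : ℝ, 0 < c → ∀ x ∈ C, c • x ∈ C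

/-- A cone is salient if it contains no nonzero linear subspace,
equivalently it contains no pair `x, -x` with `x ≠ 0`. -/
def IsSalientCone (C : Set V) : Prop := ∀ x ∈ C, x ≠ 0 → -x ∉ C

/-- The relative boundary of a set: the set minus its relative (intrinsic) interior. -/
def relBoundary (C : Set V) : Set V := C \ intrinsicInterior ℝ C

/-- `a` is an antinorm associated with the cone `C` : it takes values in `ℝ ∪ {-∞}`,
is positive on the relative interior of `C`, vanishes on the relative boundary of `C`,
is `-∞` off `C`, is positively homogeneous and superadditive (concave). -/
def IsAntinorm (C : Set V) (a : V → EReal) : Prop :=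
  (∀ v, a v ≠ ⊤) ∧
  (∀ v ∈ intrinsicInterior ℝ C, 0 < a v) ∧
  (∀ v ∈ relBoundary C, a v = 0) ∧
  (∀ v, v ∉ C → a v = ⊥) ∧
  (∀ c : ℝ, 0 < c → ∀ v, a (c • v) = (c : EReal) * a v) ∧
  (∀ v w, a v + a w ≤ a (v + w))

/-- The negative dual cone `C^∨ = {p : ⟨p,u⟩ ≤ 0 ∀ u ∈ C}`. -/
def negDual (C : Set V) : Set (V →L[ℝ] ℝ) := {p | ∀ u ∈ C, p u ≤ 0}

/-- The antisphere of radius `r`. -/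
def antisphere (a : V → EReal) (r : ℝ) : Set V := {v | a v = (r : EReal)}

/-- The dual function `α^∨(p) = -sup_{v ∈ S₁} ⟨p, v⟩`. -/
noncomputable def dualFn (a : V → EReal) (p : V →L[ℝ] ℝ) : EReal :=
  - sSup ((fun v => ((p v : ℝ) : EReal)) '' antisphere a 1)

/-- `p^∨_r` : the set of maximizers of `v ↦ ⟨p, v⟩` over the antisphere `S_r`. -/
def maxSet (a : V → EReal) (p : V →L[ℝ] ℝ) (r : ℝ) : Set V :=
  {v ∈ antisphere a r | ∀ w ∈ antisphere a r, p w ≤ p v}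

/-- `p^∨ = ⋃_{r ≥ 0} p^∨_r`. -/
def pDual (a : V → EReal) (p : V →L[ℝ] ℝ) : Set V := ⋃ r ∈ Ici (0 : ℝ), maxSet a p r

open Filter Topology

/-!
A functional that is nonpositive on `C` and vanishes at a relative interior point vanishes on all of
`C`, so `p < 0` on `S₁ ⊆ ri C`. As `p` lies on the relative boundary of the dual cone, `α^∨ p = 0`:
the supremum of `p` over `S₁` is `0` and is not attained, nor, by homogeneity, is the one over any
`S_r` with `r > 0`.

If `p` were negative on `C \ {0}`, compactness of the unit sphere would give `p v ≤ -c ‖v‖` on `C`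
with `c > 0`. Superadditivity keeps `S₁` away from the origin, so `p` would be bounded away from
`0` on `S₁`. Hence `p` vanishes at a nonzero point of `C`, which cannot be in `ri C`.
-/

section IntrinsicInterior

variable {P : Type*} [MetricSpace P] [NormedAddTorsor V P]

theorem mem_nhdsWithin_affineSpan_of_mem_intrinsicInterior {s : Set P} {x : P}
    (hx : x ∈ intrinsicInterior ℝ s) : s ∈ 𝓝[affineSpan ℝ s] x := by
  obtain ⟨y, hy, rfl⟩ := mem_intrinsicInterior.1 hx
  exact preimage_coe_mem_nhds_subtype.1 (mem_interior_iff_mem_nhds.1 hy)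

theorem eq_of_isMaxOn_of_mem_intrinsicInterior {s : Set P} {f : P →ᵃ[ℝ] ℝ} {x y : P}
    (hx : x ∈ intrinsicInterior ℝ s) (hmax : IsMaxOn f s x) (hy : y ∈ s) : f y = f x := by
  have hxs : x ∈ s := intrinsicInterior_subset hx
  have hline : Tendsto (AffineMap.lineMap x y : ℝ → P) (𝓝 0) (𝓝[affineSpan ℝ s] x) := by
    refine tendsto_nhdsWithin_iff.2 ⟨?_, .of_forall fun t => ?_⟩
    · simpa using (AffineMap.lineMap_continuous (R := ℝ) (p := x) (q := y)).tendsto 0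
    · exact AffineMap.lineMap_mem t (subset_affineSpan ℝ s hxs) (subset_affineSpan ℝ s hy)
  -- Beyond `x`, on the side away from `y`, an affine `f` with `f y < f x` would exceed `f x`.
  obtain ⟨t, hts, ht⟩ : ∃ t : ℝ, AffineMap.lineMap x y t ∈ s ∧ t < 0 :=
    (((hline.mono_left nhdsWithin_le_nhds).eventually
      (mem_nhdsWithin_affineSpan_of_mem_intrinsicInterior hx)).and
      (self_mem_nhdsWithin (s := Iio (0 : ℝ)))).exists
  have hle : t * (f y - f x) + f x ≤ f x := by
    simpa only [mem_ofPred_eq, f.apply_lineMap, AffineMap.lineMap_apply_ring'] using hmax hts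
  exact le_antisymm (hmax hy) (by nlinarith)

end IntrinsicInterior

theorem exists_pos_forall_mul_norm_le_of_isClosed [FiniteDimensional ℝ V] {C : Set V}
    (hC : IsClosed C) (hsmul : ∀ c : ℝ, 0 < c → ∀ v ∈ C, c • v ∈ C) {f : V →L[ℝ] ℝ}
    (hf : ∀ v ∈ C, v ≠ 0 → 0 < f v) : ∃ c > 0, ∀ v ∈ C, c * ‖v‖ ≤ f v := by
  have hcompact : IsCompact (Metric.sphere (0 : V) 1 ∩ C) := (isCompact_sphere 0 1).inter_right hC
  obtain ⟨c, hc, hcf⟩ := hcompact.exists_forall_le' f.continuous.continuousOn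
    fun v hv => hf v hv.2 (ne_zero_of_mem_unit_sphere ⟨v, hv.1⟩)
  refine ⟨c, hc, fun v hv => ?_⟩
  rcases eq_or_ne v 0 with rfl | hv0
  · simp
  have hnorm : 0 < ‖v‖ := norm_pos_iff.2 hv0
  have hunit : ‖v‖⁻¹ • v ∈ Metric.sphere (0 : V) 1 ∩ C :=
    ⟨by simp [norm_smul, hnorm.ne'], hsmul _ (inv_pos.2 hnorm) v hv⟩
  have hle := hcf _ hunit
  rwa [map_smul, smul_eq_mul, inv_mul_eq_div, le_div_iff₀ hnorm] at hle

theorem apply_neg_of_mem_intrinsicInterior {C : Set V} {p : V →L[ℝ] ℝ} (hp : p ∈ negDual C)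
    (hpz : ∃ u ∈ C, p u ≠ 0) {v : V} (hv : v ∈ intrinsicInterior ℝ C) : p v < 0 := by
  refine (hp v (intrinsicInterior_subset hv)).lt_of_ne fun hpv => ?_
  obtain ⟨u, hu, hpu⟩ := hpz
  have hmax : IsMaxOn p C v := fun w hw => (hp w hw).trans_eq hpv.symm
  have hconst : p u = p v :=
    eq_of_isMaxOn_of_mem_intrinsicInterior (f := p.toLinearMap.toAffineMap) hv hmax hu
  exact hpu (hconst.trans hpv)

theorem neg_le_dualFn {a : V → EReal} {p : V →L[ℝ] ℝ} {c : ℝ}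
    (hc : ∀ v ∈ antisphere a 1, p v ≤ c) : ((-c : ℝ) : EReal) ≤ dualFn a p := by
  rw [EReal.coe_neg]
  exact EReal.neg_le_neg_iff.2
    (sSup_le (forall_mem_image.2 fun v hv => EReal.coe_le_coe_iff.2 (hc v hv)))

namespace IsAntinorm

variable {C : Set V} {a : V → EReal} {p : V →L[ℝ] ℝ}

theorem pos_of_mem_intrinsicInterior (ha : IsAntinorm C a) {v : V}
    (hv : v ∈ intrinsicInterior ℝ C) : 0 < a v :=
  ha.2.1 v hv

theorem eq_zero_of_mem_relBoundary (ha : IsAntinorm C a) {v : V} (hv : v ∈ relBoundary C) :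
    a v = 0 :=
  ha.2.2.1 v hv

theorem apply_smul (ha : IsAntinorm C a) {c : ℝ} (hc : 0 < c) (v : V) :
    a (c • v) = (c : EReal) * a v :=
  ha.2.2.2.2.1 c hc v

theorem add_le_apply_add (ha : IsAntinorm C a) (v w : V) : a v + a w ≤ a (v + w) :=
  ha.2.2.2.2.2 v w

theorem mem_of_ne_bot (ha : IsAntinorm C a) {v : V} (hv : a v ≠ ⊥) : v ∈ C :=
  not_imp_comm.1 (ha.2.2.2.1 v) hv

theorem nonneg_of_mem (ha : IsAntinorm C a) {v : V} (hv : v ∈ C) : 0 ≤ a v := by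
  by_cases hri : v ∈ intrinsicInterior ℝ C
  · exact (ha.pos_of_mem_intrinsicInterior hri).le
  · exact (ha.eq_zero_of_mem_relBoundary ⟨hv, hri⟩).ge

theorem smul_mem (ha : IsAntinorm C a) {c : ℝ} (hc : 0 < c) {v : V} (hv : v ∈ C) : c • v ∈ C := by
  have hnonneg : 0 ≤ a (c • v) := by
    rw [ha.apply_smul hc]
    exact mul_nonneg (EReal.coe_nonneg.2 hc.le) (ha.nonneg_of_mem hv)
  exact ha.mem_of_ne_bot (EReal.bot_lt_zero.trans_le hnonneg).ne'

theorem antisphere_subset (ha : IsAntinorm C a) (r : ℝ) : antisphere a r ⊆ C :=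
  fun v (hv : a v = r) => ha.mem_of_ne_bot (hv ▸ EReal.coe_ne_bot r)

theorem antisphere_zero (ha : IsAntinorm C a) : antisphere a 0 = relBoundary C := by
  refine Subset.antisymm (fun v hv => ⟨ha.antisphere_subset 0 hv, fun hri => ?_⟩)
    fun v hv => ha.eq_zero_of_mem_relBoundary hv
  exact (ha.pos_of_mem_intrinsicInterior hri).ne' hv

theorem antisphere_subset_intrinsicInterior (ha : IsAntinorm C a) {r : ℝ} (hr : r ≠ 0) :
    antisphere a r ⊆ intrinsicInterior ℝ C := by
  intro v (hv : a v = r)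
  by_contra hri
  have hzero := ha.eq_zero_of_mem_relBoundary ⟨ha.antisphere_subset r hv, hri⟩
  exact hr (EReal.coe_eq_zero.1 (hv.symm.trans hzero))

theorem smul_mem_antisphere (ha : IsAntinorm C a) {c r : ℝ} (hc : 0 < c) {v : V}
    (hv : v ∈ antisphere a r) : c • v ∈ antisphere a (c * r) := by
  change a (c • v) = ((c * r : ℝ) : EReal)
  rw [ha.apply_smul hc, show a v = r from hv, EReal.coe_mul]

theorem smul_mem_maxSet (ha : IsAntinorm C a) {c r : ℝ} (hc : 0 < c) {v : V}
    (hv : v ∈ maxSet a p r) : c • v ∈ maxSet a p (c * r) := by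
  refine ⟨ha.smul_mem_antisphere hc hv.1, fun w hw => ?_⟩
  have hmem : c⁻¹ • w ∈ antisphere a r := by
    simpa only [inv_mul_cancel_left₀ hc.ne'] using ha.smul_mem_antisphere (inv_pos.2 hc) hw
  have hle := hv.2 _ hmem
  rwa [map_smul, smul_eq_mul, inv_mul_le_iff₀ hc, ← smul_eq_mul, ← map_smul] at hle

theorem pDual_eq_maxSet_zero (ha : IsAntinorm C a) (hempty : maxSet a p 1 = ∅) :
    pDual a p = maxSet a p 0 := by
  refine Subset.antisymm (iUnion₂_subset fun r (hr : 0 ≤ r) v hv => ?_)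
    (subset_biUnion_of_mem (u := maxSet a p) self_mem_Ici)
  rcases hr.eq_or_lt with rfl | hpos
  · exact hv
  · have hone : r⁻¹ • v ∈ maxSet a p 1 := by
      simpa only [inv_mul_cancel₀ hpos.ne'] using ha.smul_mem_maxSet (inv_pos.2 hpos) hv
    exact (notMem_empty _ (hempty ▸ hone)).elim

theorem sub_smul_mem_affineSpan (ha : IsAntinorm C a) {u v : V} (hu : u ∈ C) (hv : v ∈ C) (c : ℝ) :
    v - c • u ∈ affineSpan ℝ C := by
  have htwo : (2 : ℝ) • u ∈ C := ha.smul_mem two_pos hu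
  have hmem := (affineSpan ℝ C).smul_vsub_vadd_mem c (subset_affineSpan ℝ C hu)
    (subset_affineSpan ℝ C htwo) (subset_affineSpan ℝ C hv)
  have heq : c • (u -ᵥ (2 : ℝ) • u) +ᵥ v = v - c • u := by
    rw [vsub_eq_sub, vadd_eq_add]
    module
  rwa [heq] at hmem

theorem exists_pos_forall_le_norm (ha : IsAntinorm C a) {r : ℝ} (hr : 0 < r) :
    ∃ δ > 0, ∀ w ∈ antisphere a r, δ ≤ ‖w‖ := by
  rcases (antisphere a r).eq_empty_or_nonempty with hempty | ⟨v, hv⟩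
  · exact ⟨1, one_pos, by simp [hempty]⟩
  have hvri := ha.antisphere_subset_intrinsicInterior hr.ne' hv
  obtain ⟨ε, hε, hball⟩ :=
    Metric.mem_nhdsWithin_iff.1 (mem_nhdsWithin_affineSpan_of_mem_intrinsicInterior hvri)
  refine ⟨ε / 2, half_pos hε, fun w hw => ?_⟩
  by_contra! hlt
  -- If `w` were small, `v - 2w` would lie in `C`, and then `a v ≥ 2 a w = 2r > r`.
  have hwC := ha.antisphere_subset r hw
  have hmem : v - (2 : ℝ) • w ∈ C := by
    refine hball ⟨?_, ha.sub_smul_mem_affineSpan hwC (ha.antisphere_subset r hv) 2⟩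
    rw [Metric.mem_ball, dist_eq_norm, sub_sub_cancel_left, norm_neg, norm_smul, Real.norm_two]
    linarith
  have hle : ((2 * r : ℝ) : EReal) ≤ r := calc
    ((2 * r : ℝ) : EReal) = a ((2 : ℝ) • w) := (ha.smul_mem_antisphere two_pos hw).symm
    _ ≤ a (v - (2 : ℝ) • w) + a ((2 : ℝ) • w) := le_add_of_nonneg_left (ha.nonneg_of_mem hmem)
    _ ≤ a (v - (2 : ℝ) • w + (2 : ℝ) • w) := ha.add_le_apply_add _ _
    _ = r := by rw [sub_add_cancel]; exact hv
  have hle_real : 2 * r ≤ r := EReal.coe_le_coe_iff.1 hle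
  linarith

theorem maxSet_one_eq_empty (ha : IsAntinorm C a) (hp : p ∈ negDual C) (hp0 : dualFn a p = 0)
    (hpz : ∃ u ∈ C, p u ≠ 0) : maxSet a p 1 = ∅ := by
  refine eq_empty_of_forall_notMem fun v ⟨hv, hmax⟩ => ?_
  have hvri := ha.antisphere_subset_intrinsicInterior one_ne_zero hv
  have hneg : p v < 0 := apply_neg_of_mem_intrinsicInterior hp hpz hvri
  have hle : -p v ≤ 0 := EReal.coe_nonpos.1 (hp0 ▸ neg_le_dualFn hmax)
  linarith

theorem exists_ne_zero_apply_eq_zero [FiniteDimensional ℝ V] (ha : IsAntinorm C a)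
    (hC : IsClosed C) (hp : p ∈ negDual C) (hp0 : dualFn a p = 0) :
    ∃ v ∈ C, v ≠ 0 ∧ p v = 0 := by
  by_contra! hne
  have hpos : ∀ v ∈ C, v ≠ 0 → 0 < (-p) v := fun v hv hv0 =>
    neg_pos.2 ((hp v hv).lt_of_ne (hne v hv hv0))
  obtain ⟨c, hc, hbound⟩ :=
    exists_pos_forall_mul_norm_le_of_isClosed hC (fun _ hc _ hv => ha.smul_mem hc hv) hpos
  obtain ⟨δ, hδ, hfar⟩ := ha.exists_pos_forall_le_norm one_pos
  have hle : ∀ v ∈ antisphere a 1, p v ≤ -(c * δ) := fun v hv => le_neg.1 <| calc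
    c * δ ≤ c * ‖v‖ := by gcongr; exact hfar v hv
    _ ≤ -p v := hbound v (ha.antisphere_subset 1 hv)
  have hnonpos : -(-(c * δ)) ≤ 0 := EReal.coe_nonpos.1 (hp0 ▸ neg_le_dualFn hle)
  linarith [mul_pos hc hδ]

theorem mem_maxSet_zero_of_apply_eq_zero (ha : IsAntinorm C a) (hp : p ∈ negDual C)
    (hpz : ∃ u ∈ C, p u ≠ 0) {v : V} (hv : v ∈ C) (hpv : p v = 0) : v ∈ maxSet a p 0 := by
  refine ⟨?_, fun w hw => (hp w (ha.antisphere_subset 0 hw)).trans_eq hpv.symm⟩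
  rw [ha.antisphere_zero]
  exact ⟨hv, fun hri => (apply_neg_of_mem_intrinsicInterior hp hpz hri).ne hpv⟩

end IsAntinorm

theorem statement10_general [FiniteDimensional ℝ V] {C : Set V} (hC : IsClosed C)
    {a : V → EReal} (ha : IsAntinorm C a) {p : V →L[ℝ] ℝ} (hp : p ∈ negDual C)
    (hp0 : dualFn a p = 0) (hpz : ∃ u ∈ C, p u ≠ 0) :
    maxSet a p 1 = ∅ ∧
    sSup ((fun v => ((p v : ℝ) : EReal)) '' antisphere a 1) = 0 ∧
    pDual a p = maxSet a p 0 ∧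
    (∃ v ∈ maxSet a p 0, v ≠ 0) ∧
    ∀ v ∈ maxSet a p 0, v ≠ 0 → v ∈ relBoundary C := by
  have hempty := ha.maxSet_one_eq_empty hp hp0 hpz
  obtain ⟨v, hv, hv0, hpv⟩ := ha.exists_ne_zero_apply_eq_zero hC hp hp0
  exact ⟨hempty, EReal.neg_eq_zero_iff.1 hp0, ha.pDual_eq_maxSet_zero hempty,
    ⟨v, ha.mem_maxSet_zero_of_apply_eq_zero hp hpz hv hpv, hv0⟩,
    fun w hw _ => ha.antisphere_zero.subset hw.1⟩

/-- Let `C` be a salient closed convex cone, `a` a continuous antinorm whose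
dual function is an antinorm associated with `C^∨`, and let `p ∈ rb(C^∨)` be not identically
zero on `C`. Then `p^∨₁ = ∅` (the supremum of `⟨p,·⟩` over `S₁` is `0` and is not attained),
`p^∨ = p^∨₀`, the set `p^∨₀` contains a nonzero vector, and every nonzero element of `p^∨₀`
lies in the relative boundary of `C`. -/
theorem statement10 {V : Type*} [NormedAddCommGroup V] [NormedSpace ℝ V] [FiniteDimensional ℝ V]
    (C : Set V) (hC : IsClosedConvexCone C) (hsal : IsSalientCone C)
    (a : V → EReal) (ha : IsAntinorm C a) (hcont : ContinuousOn a C)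
    (hdual : IsAntinorm (negDual C) (dualFn a))
    (p : V →L[ℝ] ℝ) (hp : p ∈ relBoundary (negDual C)) (hpz : ∃ u ∈ C, p u ≠ 0) :
    maxSet a p 1 = ∅ ∧
    sSup ((fun v => ((p v : ℝ) : EReal)) '' antisphere a 1) = 0 ∧
    pDual a p = maxSet a p 0 ∧
    (∃ v ∈ maxSet a p 0, v ≠ 0) ∧
    ∀ v ∈ maxSet a p 0, v ≠ 0 → v ∈ relBoundary C := by
  exact statement10_general hC.2.1 ha hp.1 (hdual.2.2.1 p hp) hpz
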